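/- For all ξ, κ, λ ∈ ℂ such that ξ, κ, λ, κ+λ, ξ+κ, ξ+λ, ξ+κ+λ ∉ Λ, one has Ψ_ξ(κ)·Ψ_ξ(λ) = Ψ_ξ(κ+λ)·[ζ(ξ) + ζ(κ) + ζ(λ) − ζ(ξ+κ+λ)]. -/

import Mathlib

open scoped BigOperators

noncomputable section

/-- A period lattice in `ℂ` spanned by two `ℝ`-independent periods. -/
structure EllLattice where
  ω₁ : ℂ
  ω₂ : ℂ
  indep : ∀ a b : ℝ, a • ω₁ + b • ω₂ = 0 → a = 0 ∧ b = 0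

namespace EllLattice

/-- Membership in the lattice `Λ = ℤω₁ + ℤω₂`. -/
def mem (L : EllLattice) (z : ℂ) : Prop := ∃ m n : ℤ, z = m • L.ω₁ + n • L.ω₂

/-- The lattice point with integer coordinates `p = (m, n)`. -/
def per (L : EllLattice) (p : ℤ × ℤ) : ℂ := p.1 • L.ω₁ + p.2 • L.ω₂

/-- The Weierstrass sigma function associated to the lattice, defined by its
Hadamard product over the nonzero lattice points. -/
def sigma (L : EllLattice) (z : ℂ) : ℂ :=
  z * ∏' p : {p : ℤ × ℤ // p ≠ 0},
      ((1 - z / L.per p.1) *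
        Complex.exp (z / L.per p.1 + z ^ 2 / (2 * (L.per p.1) ^ 2)))

/-- The Weierstrass zeta function `ζ = σ′/σ`. -/
def zeta (L : EllLattice) (z : ℂ) : ℂ := deriv L.sigma z / L.sigma z

/-- The Weierstrass `℘`-function `℘ = −ζ′`. -/
def wp (L : EllLattice) (z : ℂ) : ℂ := - deriv L.zeta z

/-- `Φ_ξ(κ) = σ(ξ+κ)/(σ(ξ)σ(κ))`. -/
def Phi (L : EllLattice) (ξ κ : ℂ) : ℂ := L.sigma (ξ + κ) / (L.sigma ξ * L.sigma κ)

/-- The Lamé function `Ψ_ξ(κ) = Φ_ξ(κ)·e^{−ζ(ξ)κ}`. -/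
def Psi (L : EllLattice) (ξ κ : ℂ) : ℂ := L.Phi ξ κ * Complex.exp (-(L.zeta ξ) * κ)

/-- `η_δ(ξ) = ζ(ξ+δ) − ζ(ξ) − ζ(δ)`. -/
def eta (L : EllLattice) (δ ξ : ℂ) : ℂ := L.zeta (ξ + δ) - L.zeta ξ - L.zeta δ

/-- `χ_{α,β}(ξ) = ζ(α) + ζ(β) + ζ(ξ) − ζ(ξ+α+β)`. -/
def chi (L : EllLattice) (α β ξ : ℂ) : ℂ :=
  L.zeta α + L.zeta β + L.zeta ξ - L.zeta (ξ + α + β)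

end EllLattice

/-!
Cleared of denominators, the identity for `Φ` is a relation between values of `σ` and `σ′`. As a
function of `z = ξ`, the difference of its two sides is an entire function with the same factors of
automorphy as `σ(z) σ(z + κ + λ)`, and it vanishes at `0` and at `-(κ + λ)`, hence at all the zeros
of `σ(z) σ(z + κ + λ)`, which are simple. The quotient is therefore entire and doubly periodic, so
constant by Liouville's theorem, and it vanishes at `z = -κ`. The exponential factors turning `Φ`
into `Ψ` are multiplicative. The quasi-periodicity `σ(z + l) = b exp(a z) σ(z)` for `l ∈ Λ` comes
from integrating the periodicity of `℘ = -ζ′` twice.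
-/

/-! ### Quotients of entire functions -/

section RegularizedQuotient

open Filter Topology

/-- The quotient `f / g`, extended to the zeros of `g` by l'Hôpital's rule. It is meant for `g` with
simple zeros, all of them zeros of `f`. -/
def regularizedQuotient {𝕜 : Type*} [NontriviallyNormedField 𝕜] (f g : 𝕜 → 𝕜) (z : 𝕜) : 𝕜 :=
  open Classical in if g z = 0 then deriv f z / deriv g z else f z / g z

variable {𝕜 : Type*} [NontriviallyNormedField 𝕜] {f g : 𝕜 → 𝕜} {w : 𝕜}

lemma regularizedQuotient_mul_cancel (hfg : ∀ z, g z = 0 → f z = 0) (z : 𝕜) :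
    regularizedQuotient f g z * g z = f z := by
  by_cases hz : g z = 0
  · rw [hz, hfg z hz, mul_zero]
  · rw [regularizedQuotient, if_neg hz, div_mul_cancel₀ _ hz]

lemma regularizedQuotient_eventuallyEq_div (hg : ContinuousAt g w) (hw : g w ≠ 0) :
    regularizedQuotient f g =ᶠ[𝓝 w] f / g := by
  filter_upwards [hg.eventually_ne hw] with z hz
  simp [regularizedQuotient, hz]

lemma regularizedQuotient_eventuallyEq_dslope_div_dslope (hfw : f w = 0) (hgw : g w = 0)
    (hg' : deriv g w ≠ 0) :
    regularizedQuotient f g =ᶠ[𝓝 w] dslope f w / dslope g w := by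
  have hcont : ContinuousAt (dslope g w) w :=
    continuousAt_dslope_same.mpr (differentiableAt_of_deriv_ne_zero hg')
  filter_upwards [hcont.eventually_ne (by rwa [dslope_same])] with z hz
  rcases eq_or_ne z w with rfl | hzw
  · simp [regularizedQuotient, hgw]
  · have hsub : z - w ≠ 0 := sub_ne_zero.mpr hzw
    have hf : f z = (z - w) * dslope f w z := (sub_smul_dslope_of_zero hfw z).symm
    have hg : g z = (z - w) * dslope g w z := (sub_smul_dslope_of_zero hgw z).symm
    have hgz : g z ≠ 0 := hg ▸ mul_ne_zero hsub hz
    rw [regularizedQuotient, if_neg hgz, hf, hg, mul_div_mul_left _ _ hsub, Pi.div_apply]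

lemma dense_setOf_ne_zero_of_deriv_ne_zero (hg : ∀ z, g z = 0 → deriv g z ≠ 0) :
    Dense {z | g z ≠ 0} := by
  intro z
  by_cases hz : g z = 0
  · have hev : ∀ᶠ x in 𝓝[≠] z, g x ≠ 0 :=
      (differentiableAt_of_deriv_ne_zero (hg z hz)).hasDerivAt.eventually_ne (hg z hz)
    exact mem_closure_iff_frequently.mpr (hev.frequently.filter_mono nhdsWithin_le_nhds)
  · exact subset_closure hz

end RegularizedQuotient

lemma differentiable_regularizedQuotient {f g : ℂ → ℂ} (hf : Differentiable ℂ f)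
    (hg : Differentiable ℂ g) (hfg : ∀ z, g z = 0 → f z = 0)
    (hg' : ∀ z, g z = 0 → deriv g z ≠ 0) : Differentiable ℂ (regularizedQuotient f g) := by
  intro w
  by_cases hw : g w = 0
  · have hdslope {h : ℂ → ℂ} (hh : Differentiable ℂ h) : DifferentiableAt ℂ (dslope h w) w :=
      ((Complex.differentiableOn_dslope Filter.univ_mem).mpr hh.differentiableOn).differentiableAt
        Filter.univ_mem
    have hne : dslope g w w ≠ 0 := by rw [dslope_same]; exact hg' w hw
    exact ((hdslope hf).div (hdslope hg) hne).congr_of_eventuallyEq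
      (regularizedQuotient_eventuallyEq_dslope_div_dslope (hfg w hw) hw (hg' w hw))
  · exact ((hf w).div (hg w) hw).congr_of_eventuallyEq
      (regularizedQuotient_eventuallyEq_div (hg w).continuousAt hw)

section QuasiPeriodic

variable (Λ : Submodule ℤ ℂ) [DiscreteTopology Λ] [IsZLattice ℝ Λ]

lemma apply_eq_apply_of_differentiable_of_periodic {f : ℂ → ℂ} (hf : Differentiable ℂ f)
    (hper : ∀ z, ∀ l ∈ Λ, f (z + l) = f z) (z w : ℂ) : f z = f w :=
  hf.apply_eq_apply_of_bounded
    (IsZLattice.isCompact_range_of_periodic Λ f hf.continuous hper).isBounded z w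

lemma exists_eq_const_mul_of_quasiperiodic {f g : ℂ → ℂ} (hf : Differentiable ℂ f)
    (hg : Differentiable ℂ g) (hfg : ∀ z, g z = 0 → f z = 0)
    (hg' : ∀ z, g z = 0 → deriv g z ≠ 0)
    (hquasi : ∀ z, ∀ l ∈ Λ, ∃ c ≠ 0, f (z + l) = c * f z ∧ g (z + l) = c * g z) :
    ∃ C, ∀ z, f z = C * g z := by
  set q := regularizedQuotient f g
  have hq : Differentiable ℂ q := differentiable_regularizedQuotient hf hg hfg hg'
  have hqg : ∀ z, q z * g z = f z := regularizedQuotient_mul_cancel hfg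
  have hper : ∀ z, ∀ l ∈ Λ, q (z + l) = q z := by
    intro z l hl
    have hcont : Continuous fun x ↦ q (x + l) := hq.continuous.comp (continuous_add_const l)
    refine congrFun (hcont.ext_on (dense_setOf_ne_zero_of_deriv_ne_zero hg') hq.continuous ?_) z
    intro x hx
    obtain ⟨c, hc, hfc, hgc⟩ := hquasi x l hl
    refine mul_right_cancel₀ (mul_ne_zero hc hx) ?_
    calc q (x + l) * (c * g x) = f (x + l) := by rw [← hgc, hqg]
      _ = q x * (c * g x) := by rw [hfc, ← hqg]; ring
  exact ⟨q 0, fun z ↦ by rw [← hqg z, apply_eq_apply_of_differentiable_of_periodic Λ hq hper z 0]⟩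

end QuasiPeriodic

/-! ### Canonical products -/

section CanonicalProduct

open Finset Filter Topology

/-- The Weierstrass elementary factor `E_p(u) = (1 - u) exp(u + u²/2 + ⋯ + uᵖ/p)`. -/
def weierstrassFactor (p : ℕ) (u : ℂ) : ℂ :=
  (1 - u) * Complex.exp (∑ k ∈ range p, u ^ (k + 1) / (k + 1))

@[simp] lemma weierstrassFactor_zero (p : ℕ) : weierstrassFactor p 0 = 1 := by
  simp [weierstrassFactor]

lemma weierstrassFactor_ne_zero {p : ℕ} {u : ℂ} (hu : u ≠ 1) : weierstrassFactor p u ≠ 0 :=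
  mul_ne_zero (sub_ne_zero.mpr hu.symm) (Complex.exp_ne_zero _)

lemma hasDerivAt_weierstrassFactor (p : ℕ) (u : ℂ) :
    HasDerivAt (weierstrassFactor p)
      (-u ^ p * Complex.exp (∑ k ∈ range p, u ^ (k + 1) / (k + 1))) u := by
  have hsum : HasDerivAt (fun u : ℂ ↦ ∑ k ∈ range p, u ^ (k + 1) / (k + 1))
      (∑ k ∈ range p, u ^ k) u := by
    refine HasDerivAt.fun_sum fun k _ ↦ ?_
    convert! (hasDerivAt_pow (k + 1) u).div_const ((k : ℂ) + 1) using 1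
    have hk : (k : ℂ) + 1 ≠ 0 := Nat.cast_add_one_ne_zero k
    push_cast
    field_simp
  convert! ((hasDerivAt_id u).const_sub 1).mul hsum.cexp using 1
  have hgeom := mul_neg_geom_sum u p
  simp only [id_eq]
  linear_combination -(Complex.exp (∑ k ∈ range p, u ^ (k + 1) / (k + 1))) * hgeom

lemma differentiable_weierstrassFactor (p : ℕ) : Differentiable ℂ (weierstrassFactor p) :=
  fun u ↦ (hasDerivAt_weierstrassFactor p u).differentiableAt

lemma logDeriv_weierstrassFactor (p : ℕ) (u : ℂ) :
    logDeriv (weierstrassFactor p) u = -u ^ p / (1 - u) := by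
  rw [logDeriv_apply, (hasDerivAt_weierstrassFactor p u).deriv, weierstrassFactor,
    mul_div_mul_right _ _ (Complex.exp_ne_zero _)]

lemma norm_weierstrassFactor_sub_one_le (p : ℕ) {u : ℂ} (hu : ‖u‖ ≤ 1) :
    ‖weierstrassFactor p u - 1‖ ≤ Real.exp p * ‖u‖ ^ (p + 1) := by
  have hexp (v : ℂ) (hv : ‖v‖ ≤ ‖u‖) :
      ‖Complex.exp (∑ k ∈ range p, v ^ (k + 1) / (k + 1))‖ ≤ Real.exp p := by
    refine (Complex.norm_exp_le_exp_norm _).trans (Real.exp_le_exp.mpr ?_)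
    refine (norm_sum_le_of_le (f := fun k : ℕ ↦ v ^ (k + 1) / ((k : ℂ) + 1)) _
      (n := fun _ ↦ (1 : ℝ)) fun k _ ↦ ?_).trans (by simp)
    have hk : ‖(k : ℂ) + 1‖ = k + 1 := by exact_mod_cast Complex.norm_natCast (k + 1)
    rw [norm_div, norm_pow, hk]
    exact div_le_one_of_le₀ ((pow_le_one₀ (norm_nonneg v) (hv.trans hu)).trans (by simp))
      (by positivity)
  have hderiv (v : ℂ) (hv : v ∈ Metric.closedBall (0 : ℂ) ‖u‖) :
      ‖-v ^ p * Complex.exp (∑ k ∈ range p, v ^ (k + 1) / (k + 1))‖ ≤ ‖u‖ ^ p * Real.exp p := by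
    have hv' : ‖v‖ ≤ ‖u‖ := mem_closedBall_zero_iff.mp hv
    rw [norm_mul, norm_neg, norm_pow]
    gcongr
    exact hexp v hv'
  have hmvt := (convex_closedBall (0 : ℂ) ‖u‖).norm_image_sub_le_of_norm_hasDerivWithin_le
    (fun v _ ↦ (hasDerivAt_weierstrassFactor p v).hasDerivWithinAt) hderiv
    (Metric.mem_closedBall_self (norm_nonneg u)) (mem_closedBall_zero_iff.mpr le_rfl)
  rw [weierstrassFactor_zero, sub_zero] at hmvt
  exact hmvt.trans_eq (by ring)

/-- The canonical product `∏ E_p(z / aᵢ)` of genus `p` with zeros `aᵢ`. By the convention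
`z / 0 = 0`, an index with `aᵢ = 0` contributes the factor `1`. -/
def canonicalProduct {ι : Type*} (p : ℕ) (a : ι → ℂ) (z : ℂ) : ℂ :=
  ∏' i, weierstrassFactor p (z / a i)

lemma hasSum_logDeriv_of_hasProdLocallyUniformlyOn {ι : Type*} {f : ι → ℂ → ℂ} {F : ℂ → ℂ}
    {s : Set ℂ} {z : ℂ} (h : HasProdLocallyUniformlyOn f F s) (hs : IsOpen s) (hz : z ∈ s)
    (hf : ∀ i, DifferentiableOn ℂ (f i) s) (hfz : ∀ i, f i z ≠ 0) (hFz : F z ≠ 0) :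
    HasSum (fun i ↦ logDeriv (f i) z) (logDeriv F z) := by
  refine (Complex.logDeriv_tendsto hs hz h (.of_forall <| by fun_prop) hFz).congr fun t ↦ ?_
  rw [logDeriv_prod (fun i _ ↦ hfz i) (fun i _ ↦ (hf i z hz).differentiableAt (hs.mem_nhds hz))]

variable {ι : Type*} {p : ℕ} {a : ι → ℂ}

lemma canonicalProduct_zero : canonicalProduct p a 0 = 1 := by
  simp [canonicalProduct]

lemma eventually_norm_weierstrassFactor_div_sub_one_le
    (ha : Summable fun i ↦ (‖a i‖ ^ (p + 1))⁻¹) (R : ℝ) :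
    ∀ᶠ i in cofinite, ∀ z : ℂ, ‖z‖ ≤ R →
      ‖weierstrassFactor p (z / a i) - 1‖ ≤ Real.exp p * R ^ (p + 1) * (‖a i‖ ^ (p + 1))⁻¹ := by
  have hlim : Tendsto (fun i ↦ R ^ (p + 1) * (‖a i‖ ^ (p + 1))⁻¹) cofinite (𝓝 0) := by
    simpa using ha.tendsto_cofinite_zero.const_mul (R ^ (p + 1))
  filter_upwards [hlim.eventually_lt_const one_pos] with i hi z hz
  have hpow : ‖z / a i‖ ^ (p + 1) ≤ R ^ (p + 1) * (‖a i‖ ^ (p + 1))⁻¹ := by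
    rw [norm_div, div_pow, div_eq_mul_inv]
    gcongr
  have hle : ‖z / a i‖ ≤ 1 :=
    (pow_le_one_iff_of_nonneg (norm_nonneg _) p.succ_ne_zero).mp (hpow.trans hi.le)
  calc ‖weierstrassFactor p (z / a i) - 1‖ ≤ Real.exp p * ‖z / a i‖ ^ (p + 1) :=
        norm_weierstrassFactor_sub_one_le p hle
    _ ≤ Real.exp p * (R ^ (p + 1) * (‖a i‖ ^ (p + 1))⁻¹) := by gcongr
    _ = _ := (mul_assoc _ _ _).symm

lemma differentiable_weierstrassFactor_div (p : ℕ) (c : ℂ) :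
    Differentiable ℂ fun z ↦ weierstrassFactor p (z / c) :=
  (differentiable_weierstrassFactor p).comp (differentiable_id.div_const c)

lemma hasProdLocallyUniformlyOn_canonicalProduct
    (ha : Summable fun i ↦ (‖a i‖ ^ (p + 1))⁻¹) :
    HasProdLocallyUniformlyOn (fun i z ↦ weierstrassFactor p (z / a i)) (canonicalProduct p a)
      Set.univ := by
  refine hasProdLocallyUniformlyOn_of_forall_compact isOpen_univ fun K _ hK ↦ ?_
  obtain ⟨R, hR⟩ := hK.isBounded.exists_norm_le
  have hprod := Summable.hasProdUniformlyOn_one_add hK (ha.mul_left (Real.exp p * R ^ (p + 1)))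
    ((eventually_norm_weierstrassFactor_div_sub_one_le ha R).mono fun i hi z hz ↦ hi z (hR z hz))
    (fun i ↦ ((differentiable_weierstrassFactor_div p (a i)).continuous.sub
      continuous_const).continuousOn)
  simpa only [add_sub_cancel] using! hprod

lemma differentiable_canonicalProduct (ha : Summable fun i ↦ (‖a i‖ ^ (p + 1))⁻¹) :
    Differentiable ℂ (canonicalProduct p a) :=
  differentiableOn_univ.mp <|
    TendstoLocallyUniformlyOn.differentiableOn (hasProdLocallyUniformlyOn_canonicalProduct ha)
      (.of_forall fun _ ↦ .fun_finsetProd fun i _ ↦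
        (differentiable_weierstrassFactor_div p (a i)).differentiableOn) isOpen_univ

lemma canonicalProduct_ne_zero (ha : Summable fun i ↦ (‖a i‖ ^ (p + 1))⁻¹) {z : ℂ}
    (hz : ∀ i, z / a i ≠ 1) : canonicalProduct p a z ≠ 0 := by
  have hsum : Summable fun i ↦ ‖weierstrassFactor p (z / a i) - 1‖ :=
    .of_norm_bounded_eventually (ha.mul_left (Real.exp p * ‖z‖ ^ (p + 1))) <|
      (eventually_norm_weierstrassFactor_div_sub_one_le ha ‖z‖).mono fun i hi ↦ by
        simpa using hi z le_rfl
  simpa [canonicalProduct] using tprod_one_add_ne_zero_of_summable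
    (fun i ↦ by simpa using weierstrassFactor_ne_zero (p := p) (hz i)) hsum

lemma hasSum_logDeriv_canonicalProduct (ha : Summable fun i ↦ (‖a i‖ ^ (p + 1))⁻¹) {z : ℂ}
    (hz : ∀ i, z / a i ≠ 1) :
    HasSum (fun i ↦ -(z / a i) ^ p / (1 - z / a i) / a i)
      (logDeriv (canonicalProduct p a) z) := by
  have hlog (i : ι) : logDeriv (fun z ↦ weierstrassFactor p (z / a i)) z =
      -(z / a i) ^ p / (1 - z / a i) / a i := by
    have hcomp := logDeriv_comp (g := fun z ↦ z / a i)
      (differentiable_weierstrassFactor p (z / a i)) (differentiableAt_fun_id.div_const (a i))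
    simpa [Function.comp_def, logDeriv_weierstrassFactor, div_eq_mul_inv] using hcomp
  simp_rw [← hlog]
  exact hasSum_logDeriv_of_hasProdLocallyUniformlyOn
    (hasProdLocallyUniformlyOn_canonicalProduct ha) isOpen_univ (Set.mem_univ z)
    (fun i ↦ (differentiable_weierstrassFactor_div p (a i)).differentiableOn)
    (fun i ↦ weierstrassFactor_ne_zero (hz i)) (canonicalProduct_ne_zero ha hz)

end CanonicalProduct

namespace EllLattice

variable (L : EllLattice)

/-! ### The period lattice -/

/-- The pair of periods `(ω₁, ω₂)` as a Mathlib `PeriodPair`, giving access to the library's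
lattice and `℘`-function. -/
def toPeriodPair : PeriodPair where
  ω₁ := L.ω₁
  ω₂ := L.ω₂
  indep := LinearIndependent.pair_iff.mpr L.indep

/-- The lattice `Λ = ℤω₁ + ℤω₂` as a subgroup of `ℂ`. -/
abbrev lattice : Submodule ℤ ℂ := L.toPeriodPair.lattice

lemma mem_iff_mem_lattice {z : ℂ} : L.mem z ↔ z ∈ L.lattice := by
  simp [PeriodPair.mem_lattice, mem, toPeriodPair, eq_comm]

lemma isOpen_compl_lattice : IsOpen (L.lattice : Set ℂ)ᶜ :=
  L.toPeriodPair.isClosed_lattice.isOpen_compl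

lemma countable_lattice : (L.lattice : Set ℂ).Countable :=
  Set.countable_coe_iff.mp (L.toPeriodPair.latticeEquivProd.toEquiv.countable_iff.mpr inferInstance)

lemma dense_compl_lattice : Dense (L.lattice : Set ℂ)ᶜ :=
  L.countable_lattice.dense_compl ℝ

lemma isPreconnected_compl_lattice : IsPreconnected (L.lattice : Set ℂ)ᶜ :=
  (L.countable_lattice.isPathConnected_compl_of_one_lt_rank
    (by simp)).isConnected.isPreconnected

lemma summable_inv_norm_cube : Summable fun l : L.lattice ↦ (‖(l : ℂ)‖ ^ (2 + 1))⁻¹ := by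
  simpa using! ZLattice.summable_norm_pow_inv L.lattice 3 (by simp)

variable {L} in
lemma div_coe_lattice_ne_one {z : ℂ} (hz : z ∉ L.lattice) (l : L.lattice) : z / (l : ℂ) ≠ 1 :=
  fun h ↦ hz (eq_of_div_eq_one h ▸ l.2)

/-! ### The sigma function -/

lemma sigma_eq_mul_canonicalProduct (z : ℂ) :
    L.sigma z = z * canonicalProduct 2 (fun l : L.lattice ↦ (l : ℂ)) z := by
  have hfactor (l : ℂ) : weierstrassFactor 2 (z / l) =
      (1 - z / l) * Complex.exp (z / l + z ^ 2 / (2 * l ^ 2)) := by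
    rw [weierstrassFactor]
    congr 2
    simp only [Finset.sum_range_succ, Finset.sum_range_zero]
    push_cast
    ring
  have hcoe (p : ℤ × ℤ) :
      ((L.toPeriodPair.latticeEquivProd.symm.toEquiv p : L.lattice) : ℂ) = L.per p := by
    rw [LinearEquiv.coe_toEquiv, PeriodPair.latticeEquiv_symm_apply]
    simp [per, toPeriodPair]
  have hsupp : Function.mulSupport (fun p ↦ weierstrassFactor 2 (z / L.per p)) ⊆ {p | p ≠ 0} := by
    rintro p hp rfl
    simp [per] at hp
  rw [sigma, canonicalProduct, ← L.toPeriodPair.latticeEquivProd.symm.toEquiv.tprod_eq]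
  simp_rw [hcoe, ← hfactor]
  rw [← tprod_subtype_eq_of_mulSupport_subset hsupp]
  rfl

lemma differentiable_sigma : Differentiable ℂ L.sigma := by
  rw [funext L.sigma_eq_mul_canonicalProduct]
  exact differentiable_id.mul (differentiable_canonicalProduct L.summable_inv_norm_cube)

@[simp] lemma sigma_zero : L.sigma 0 = 0 := by simp [sigma]

@[simp] lemma deriv_sigma_zero : deriv L.sigma 0 = 1 := by
  rw [funext L.sigma_eq_mul_canonicalProduct]
  simpa [canonicalProduct_zero] using! ((hasDerivAt_id (0 : ℂ)).mul
    (differentiable_canonicalProduct L.summable_inv_norm_cube 0).hasDerivAt).deriv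

@[simp] lemma sigma_neg (z : ℂ) : L.sigma (-z) = -L.sigma z := by
  rw [sigma_eq_mul_canonicalProduct, sigma_eq_mul_canonicalProduct, neg_mul, canonicalProduct,
    ← (Equiv.neg L.lattice).tprod_eq]
  simp [canonicalProduct]

@[simp] lemma deriv_sigma_neg (z : ℂ) : deriv L.sigma (-z) = deriv L.sigma z := by
  have h := deriv_comp_neg L.sigma z
  rw [funext L.sigma_neg, deriv.fun_neg] at h
  exact (neg_injective h).symm

variable {L}

lemma sigma_ne_zero {z : ℂ} (hz : z ∉ L.lattice) : L.sigma z ≠ 0 := by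
  rw [sigma_eq_mul_canonicalProduct]
  exact mul_ne_zero (fun h ↦ hz (h ▸ zero_mem _))
    (canonicalProduct_ne_zero L.summable_inv_norm_cube (div_coe_lattice_ne_one hz))

/-! ### The zeta function -/

lemma zeta_eq_logDeriv_sigma : L.zeta = logDeriv L.sigma := rfl

/-- The term `l = 0` is `1 / z`, by the convention `1 / 0 = 0`. -/
lemma hasSum_zeta {z : ℂ} (hz : z ∉ L.lattice) :
    HasSum (fun l : L.lattice ↦ 1 / (z - l) + 1 / (l : ℂ) + z / (l : ℂ) ^ 2) (L.zeta z) := by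
  have hz0 : z ≠ 0 := fun h ↦ hz (h ▸ zero_mem _)
  have hsummable := L.summable_inv_norm_cube
  have hlog : L.zeta z = 1 / z + logDeriv (canonicalProduct 2 fun l : L.lattice ↦ (l : ℂ)) z := by
    rw [zeta_eq_logDeriv_sigma, funext L.sigma_eq_mul_canonicalProduct,
      logDeriv_mul (f := fun z ↦ z) z hz0
        (canonicalProduct_ne_zero hsummable (div_coe_lattice_ne_one hz)) differentiableAt_fun_id
        (differentiable_canonicalProduct hsummable z), logDeriv_apply, deriv_id'']
  rw [hlog]
  convert! (hasSum_ite_eq (0 : L.lattice) (1 / z)).add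
    (hasSum_logDeriv_canonicalProduct hsummable (div_coe_lattice_ne_one hz)) using 2 with l
  rcases eq_or_ne l 0 with rfl | hl
  · simp
  · have hl0 : (l : ℂ) ≠ 0 := by simpa using hl
    have hzl : z - l ≠ 0 := fun h ↦ hz (sub_eq_zero.mp h ▸ l.2)
    have hone : 1 - z / (l : ℂ) = -(z - l) / l := by field_simp; ring
    rw [if_neg hl, hone]
    field_simp
    ring

lemma hasDerivAt_zeta {z : ℂ} (hz : z ∉ L.lattice) :
    HasDerivAt L.zeta (-L.toPeriodPair.weierstrassP z) z := by
  have hterm {x : ℂ} (hx : x ∉ L.lattice) (l : L.lattice) :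
      HasDerivAt (fun x ↦ 1 / (x - l) + 1 / (l : ℂ) + x / (l : ℂ) ^ 2)
        (-(1 / (x - l) ^ 2 - 1 / (l : ℂ) ^ 2)) x := by
    have hxl : x - l ≠ 0 := fun h ↦ hx (sub_eq_zero.mp h ▸ l.2)
    convert! ((((hasDerivAt_id x).sub_const (l : ℂ)).fun_inv hxl).add_const (1 / (l : ℂ))).add
      ((hasDerivAt_id x).div_const ((l : ℂ) ^ 2)) using 1
    · simp [Pi.add_def]
    · simp only [id_eq]; ring
  have hderiv := L.toPeriodPair.hasSumLocallyUniformly_weierstrassP.tendstoLocallyUniformlyOn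
    (s := (L.lattice : Set ℂ)ᶜ)
  refine hasDerivAt_of_tendstoLocallyUniformlyOn L.isOpen_compl_lattice hderiv.neg
    (.of_forall fun s x hx ↦ ?_) (fun x hx ↦ hasSum_zeta hx) hz
  simpa using HasDerivAt.fun_sum fun l _ ↦ hterm hx l

/-! ### Quasi-periodicity -/

lemma add_mem_lattice_iff {z l : ℂ} (hl : l ∈ L.lattice) : z + l ∈ L.lattice ↔ z ∈ L.lattice :=
  Submodule.add_mem_iff_left _ hl

lemma exists_zeta_add_eq {l : ℂ} (hl : l ∈ L.lattice) :
    ∃ a, ∀ z ∉ L.lattice, L.zeta (z + l) = L.zeta z + a := by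
  have hderiv (z : ℂ) (hz : z ∉ L.lattice) :
      HasDerivAt (fun z ↦ L.zeta (z + l) - L.zeta z) 0 z := by
    have hzl := hasDerivAt_zeta ((add_mem_lattice_iff hl).not.mpr hz)
    rw [L.toPeriodPair.weierstrassP_add_coe z ⟨l, hl⟩] at hzl
    simpa using (hzl.comp_add_const z l).fun_sub (hasDerivAt_zeta hz)
  obtain ⟨a, ha⟩ := L.isOpen_compl_lattice.exists_is_const_of_deriv_eq_zero
    L.isPreconnected_compl_lattice
    (fun z hz ↦ (hderiv z hz).differentiableAt.differentiableWithinAt)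
    (fun z hz ↦ (hderiv z hz).deriv)
  exact ⟨a, fun z hz ↦ by rw [← ha z hz]; ring⟩

lemma exists_sigma_add_eq {l : ℂ} (hl : l ∈ L.lattice) :
    ∃ a b : ℂ, b ≠ 0 ∧ ∀ z, L.sigma (z + l) = b * Complex.exp (a * z) * L.sigma z := by
  obtain ⟨a, ha⟩ := exists_zeta_add_eq hl
  have hσ := L.differentiable_sigma
  have hshift : Differentiable ℂ fun z ↦ L.sigma (z + l) := by fun_prop
  have hmul : Differentiable ℂ fun z ↦ Complex.exp (a * z) * L.sigma z := by fun_prop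
  have hlog : Set.EqOn (logDeriv fun z ↦ L.sigma (z + l))
      (logDeriv fun z ↦ Complex.exp (a * z) * L.sigma z) (L.lattice : Set ℂ)ᶜ := by
    intro z hz
    have hexp : logDeriv (fun z ↦ Complex.exp (a * z)) z = a := by
      simpa [Function.comp_def] using
        logDeriv_comp (g := (a * ·)) Complex.differentiableAt_exp
          (differentiableAt_id.const_mul a)
    rw [logDeriv_mul (f := fun z ↦ Complex.exp (a * z)) z (Complex.exp_ne_zero _)
      (sigma_ne_zero hz) (by fun_prop) (hσ z), hexp, logDeriv_apply, deriv_comp_add_const,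
      add_comm a]
    exact ha z hz
  obtain ⟨b, hb, hσb⟩ := (logDeriv_eqOn_iff hshift.differentiableOn hmul.differentiableOn
    L.isOpen_compl_lattice L.isPreconnected_compl_lattice
    (fun z hz ↦ mul_ne_zero (Complex.exp_ne_zero _) (sigma_ne_zero hz))
    (fun z hz ↦ sigma_ne_zero ((add_mem_lattice_iff hl).not.mpr hz))).mp hlog
  have heq := hshift.continuous.ext_on L.dense_compl_lattice (hmul.continuous.const_smul b) hσb
  exact ⟨a, b, hb, fun z ↦ by simpa [mul_assoc] using congrFun heq z⟩

lemma sigma_eq_zero_iff {z : ℂ} : L.sigma z = 0 ↔ z ∈ L.lattice := by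
  refine ⟨fun h ↦ by_contra fun hz ↦ sigma_ne_zero hz h, fun hz ↦ ?_⟩
  obtain ⟨a, b, -, hσ⟩ := exists_sigma_add_eq hz
  simpa using hσ 0

lemma deriv_sigma_add_eq {l a b : ℂ}
    (hσ : ∀ z, L.sigma (z + l) = b * Complex.exp (a * z) * L.sigma z) (z : ℂ) :
    deriv L.sigma (z + l) = b * Complex.exp (a * z) * (deriv L.sigma z + a * L.sigma z) := by
  have hexp : HasDerivAt (fun z ↦ Complex.exp (a * z)) (Complex.exp (a * z) * (a * 1)) z :=
    ((hasDerivAt_id z).const_mul a).cexp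
  rw [← deriv_comp_add_const, funext hσ,
    ((hexp.const_mul b).fun_mul (L.differentiable_sigma z).hasDerivAt).deriv]
  ring

lemma deriv_sigma_ne_zero {l : ℂ} (hl : l ∈ L.lattice) : deriv L.sigma l ≠ 0 := by
  obtain ⟨a, b, hb, hσ⟩ := exists_sigma_add_eq hl
  have hl' : deriv L.sigma l = b := by simpa using deriv_sigma_add_eq hσ 0
  exact hl' ▸ hb

/-! ### The addition formula -/

variable (L)

/-- The difference of the two sides of
`Φ_z(κ) Φ_z(λ) = Φ_z(κ + λ) (ζ(z) + ζ(κ) + ζ(λ) - ζ(z + κ + λ))`, multiplied by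
`σ(z)² σ(κ) σ(λ) σ(κ + λ)`. -/
def sigmaDefect (κ lam z : ℂ) : ℂ :=
  L.sigma (z + κ) * L.sigma (z + lam) * L.sigma (κ + lam) -
    (L.sigma (z + (κ + lam)) * (deriv L.sigma z * L.sigma κ * L.sigma lam +
        L.sigma z * deriv L.sigma κ * L.sigma lam + L.sigma z * L.sigma κ * deriv L.sigma lam) -
      deriv L.sigma (z + (κ + lam)) * L.sigma z * L.sigma κ * L.sigma lam)

lemma differentiable_sigmaDefect (κ lam : ℂ) : Differentiable ℂ (L.sigmaDefect κ lam) := by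
  have hσ := L.differentiable_sigma
  have : Differentiable ℂ (deriv L.sigma) := hσ.deriv
  unfold sigmaDefect
  fun_prop

lemma sigmaDefect_zero (κ lam : ℂ) : L.sigmaDefect κ lam 0 = 0 := by
  simp only [sigmaDefect, zero_add, sigma_zero, deriv_sigma_zero]
  ring

lemma sigmaDefect_neg_add (κ lam : ℂ) : L.sigmaDefect κ lam (-(κ + lam)) = 0 := by
  have hκ : -(κ + lam) + κ = -lam := by ring
  have hlam : -(κ + lam) + lam = -κ := by ring
  rw [sigmaDefect, hκ, hlam, neg_add_cancel, deriv_sigma_zero, sigma_zero]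
  simp only [sigma_neg]
  ring

lemma sigmaDefect_neg (κ lam : ℂ) : L.sigmaDefect κ lam (-κ) = 0 := by
  rw [sigmaDefect, neg_add_cancel, neg_add_cancel_left]
  simp only [sigma_zero, sigma_neg, deriv_sigma_neg]
  ring

variable {L} {κ lam : ℂ}

lemma exists_sigmaDefect_add_eq (z : ℂ) {l : ℂ} (hl : l ∈ L.lattice) :
    ∃ c ≠ 0, L.sigmaDefect κ lam (z + l) = c * L.sigmaDefect κ lam z ∧
      L.sigma (z + l) * L.sigma (z + l + (κ + lam)) =
        c * (L.sigma z * L.sigma (z + (κ + lam))) := by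
  obtain ⟨a, b, hb, hσ⟩ := exists_sigma_add_eq hl
  have hσ' := deriv_sigma_add_eq hσ
  have hadd (x : ℂ) : z + l + x = z + x + l := add_right_comm z l x
  refine ⟨b ^ 2 * Complex.exp (a * z) ^ 2 * Complex.exp (a * κ) * Complex.exp (a * lam),
    by simp [hb], ?_, ?_⟩
  · simp only [sigmaDefect, hadd, hσ, hσ', mul_add, Complex.exp_add]
    ring
  · simp only [hadd, hσ, mul_add, Complex.exp_add]
    ring

lemma sigmaDefect_add_eq_zero {w l : ℂ} (hw : L.sigmaDefect κ lam w = 0) (hl : l ∈ L.lattice) :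
    L.sigmaDefect κ lam (w + l) = 0 := by
  obtain ⟨c, -, hc, -⟩ := exists_sigmaDefect_add_eq (κ := κ) (lam := lam) w hl
  rw [hc, hw, mul_zero]

lemma sigmaDefect_eq_zero_of_sigma_mul_sigma_eq_zero {z : ℂ}
    (hz : L.sigma z * L.sigma (z + (κ + lam)) = 0) : L.sigmaDefect κ lam z = 0 := by
  rcases mul_eq_zero.mp hz with h | h
  · simpa using sigmaDefect_add_eq_zero (L.sigmaDefect_zero κ lam) (sigma_eq_zero_iff.mp h)
  · have hzΛ : z = -(κ + lam) + (z + (κ + lam)) := by ring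
    rw [hzΛ]
    exact sigmaDefect_add_eq_zero (L.sigmaDefect_neg_add κ lam) (sigma_eq_zero_iff.mp h)

lemma deriv_sigma_mul_sigma_ne_zero {s z : ℂ} (hs : s ∉ L.lattice)
    (hz : L.sigma z * L.sigma (z + s) = 0) :
    deriv (fun z ↦ L.sigma z * L.sigma (z + s)) z ≠ 0 := by
  have hσ := L.differentiable_sigma
  rw [((hσ z).hasDerivAt.fun_mul ((hσ (z + s)).hasDerivAt.comp_add_const z s)).deriv]
  rcases mul_eq_zero.mp hz with h | h
  · have hzΛ := sigma_eq_zero_iff.mp h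
    have hzs : z + s ∉ L.lattice := by rwa [add_comm, add_mem_lattice_iff hzΛ]
    simpa [h] using ⟨deriv_sigma_ne_zero hzΛ, sigma_ne_zero hzs⟩
  · have hzs := sigma_eq_zero_iff.mp h
    have hzΛ : z ∉ L.lattice := fun hzΛ ↦ hs (by rwa [add_comm, add_mem_lattice_iff hzΛ] at hzs)
    simpa [h] using ⟨sigma_ne_zero hzΛ, deriv_sigma_ne_zero hzs⟩

lemma sigmaDefect_eq_zero (hκ : κ ∉ L.lattice) (hlam : lam ∉ L.lattice)
    (hκlam : κ + lam ∉ L.lattice) (z : ℂ) : L.sigmaDefect κ lam z = 0 := by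
  have hσ := L.differentiable_sigma
  obtain ⟨C, hC⟩ := exists_eq_const_mul_of_quasiperiodic L.lattice
    (g := fun z ↦ L.sigma z * L.sigma (z + (κ + lam)))
    (L.differentiable_sigmaDefect κ lam) (by fun_prop)
    (fun _ ↦ sigmaDefect_eq_zero_of_sigma_mul_sigma_eq_zero)
    (fun _ ↦ deriv_sigma_mul_sigma_ne_zero hκlam)
    (fun z _ hl ↦ exists_sigmaDefect_add_eq z hl)
  have hC0 : C = 0 := by
    simpa [sigmaDefect_neg, sigma_ne_zero hκ, sigma_ne_zero hlam] using hC (-κ)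
  rw [hC, hC0, zero_mul]

lemma Phi_mul_Phi {ξ : ℂ} (hξ : ξ ∉ L.lattice) (hκ : κ ∉ L.lattice) (hlam : lam ∉ L.lattice)
    (hκlam : κ + lam ∉ L.lattice) (hξκlam : ξ + κ + lam ∉ L.lattice) :
    L.Phi ξ κ * L.Phi ξ lam =
      L.Phi ξ (κ + lam) * (L.zeta ξ + L.zeta κ + L.zeta lam - L.zeta (ξ + κ + lam)) := by
  have hdefect := sigmaDefect_eq_zero hκ hlam hκlam ξ
  rw [sigmaDefect] at hdefect
  rw [add_assoc ξ κ lam] at hξκlam ⊢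
  have hσξ := sigma_ne_zero hξ
  have hσκ := sigma_ne_zero hκ
  have hσlam := sigma_ne_zero hlam
  have hσκlam := sigma_ne_zero hκlam
  have hσξκlam := sigma_ne_zero hξκlam
  simp only [Phi, zeta]
  field_simp
  linear_combination hdefect

end EllLattice

/-- `Ψ_ξ(κ)Ψ_ξ(λ) = Ψ_ξ(κ+λ)·[ζ(ξ)+ζ(κ)+ζ(λ)−ζ(ξ+κ+λ)]`. -/
theorem Psi_same_suffix_product (L : EllLattice) (ξ κ lam : ℂ)
    (h1 : ¬ L.mem ξ) (h2 : ¬ L.mem κ) (h3 : ¬ L.mem lam)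
    (h4 : ¬ L.mem (κ + lam)) (h5 : ¬ L.mem (ξ + κ)) (h6 : ¬ L.mem (ξ + lam))
    (h7 : ¬ L.mem (ξ + κ + lam)) :
    L.Psi ξ κ * L.Psi ξ lam =
      L.Psi ξ (κ + lam) *
        (L.zeta ξ + L.zeta κ + L.zeta lam - L.zeta (ξ + κ + lam)) := by
  rw [L.mem_iff_mem_lattice] at h1 h2 h3 h4 h7
  simp only [EllLattice.Psi, mul_add, Complex.exp_add]
  linear_combination Complex.exp (-L.zeta ξ * κ) * Complex.exp (-L.zeta ξ * lam) *
    EllLattice.Phi_mul_Phi h1 h2 h3 h4 h7
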